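/- Let u ∈ C([0,T]; C¹_b(ℝ³,ℝ³)) with div u(t) = 0 for every t, and let X^x_s solve dX^x_s = u(s, X^x_s) ds + √(2ν) dW_s, X^x_0 = x. Then for each s and each ω, the map x ↦ X^x_s(ω) is a diffeomorphism of ℝ³ whose Jacobian determinant equals 1 everywhere, and consequently ∫_{ℝ³} φ(X^x_s(ω)) dx = ∫_{ℝ³} φ(x) dx for every φ ∈ L¹(ℝ³). -/

import Mathlib

open Set Real MeasureTheory

noncomputable section

local notation "E3" => EuclideanSpace ℝ (Fin 3)

/-! The noise is additive, so it cancels in the difference of two paths, which therefore solves an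
ordinary differential equation with the Lipschitz field `u`. Grönwall's inequality, used forwards
and backwards in time, shows that `x ↦ X x s` is bi-Lipschitz.

Its derivative `Φ` solves the variational equation `Φ' = ∇u(s, X x s) Φ`, `Φ 0 = 1`. Since `u` is
only jointly continuous, `∇u` is merely bounded and measurable in time: `Φ` is constructed as a
Dyson series and the equation holds for almost every time only. Nevertheless `det Φ` is absolutely
continuous, so Liouville's formula `det Φ s = exp (∫ tr ∇u)` holds and `div u = 0` forces
`det Φ = 1`.

The flow map is thus open by the inverse function theorem and has closed range by the bi-Lipschitz
bound, so it is onto and a `C¹` diffeomorphism; the change of variables formula does the rest.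
-/

open Filter Topology NNReal

section Gronwall

theorem le_mul_exp_of_le_add_mul_integral {g : ℝ → ℝ} {C K a b : ℝ} (hab : a ≤ b) (hK : 0 ≤ K)
    (hg : Continuous g) (h : ∀ t ∈ Icc a b, g t ≤ C + K * ∫ r in a..t, g r) :
    g b ≤ C * exp (K * (b - a)) := by
  have hderiv (t : ℝ) : HasDerivAt (fun t ↦ C + K * ∫ r in a..t, g r) (K * g t) t :=
    ((hg.integral_hasStrictDerivAt a t).hasDerivAt.const_mul K).const_add C
  have hgronwall := le_gronwallBound_of_liminf_deriv_right_le (δ := C) (ε := 0)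
    (fun t _ ↦ (hderiv t).continuousAt.continuousWithinAt)
    (fun t _ r hr ↦ (hderiv t).hasDerivWithinAt.liminf_right_slope_le hr)
    (by simp)
    (fun t ht ↦ by
      rw [add_zero]
      exact mul_le_mul_of_nonneg_left (h t (Ico_subset_Icc_self ht)) hK)
    b (right_mem_Icc.2 hab)
  rw [gronwallBound_ε0] at hgronwall
  exact (h b (right_mem_Icc.2 hab)).trans hgronwall

variable {F : Type*} [NormedAddCommGroup F] [NormedSpace ℝ F] {D p : ℝ → F}

theorem norm_le_of_eq_add_integral {e : ℝ → ℝ} {K a b : ℝ} (hab : a ≤ b) (hK : 0 ≤ K)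
    (hD : Continuous D) (he : IntervalIntegrable e volume a b) (he0 : ∀ r, 0 ≤ e r)
    (hDp : ∀ t ∈ Icc a b, D t = D a + ∫ r in a..t, p r)
    (hp : ∀ r ∈ Icc a b, ‖p r‖ ≤ e r + K * ‖D r‖) :
    ‖D b‖ ≤ (‖D a‖ + ∫ r in a..b, e r) * exp (K * (b - a)) := by
  refine le_mul_exp_of_le_add_mul_integral hab hK hD.norm fun t ht ↦ ?_
  have het : IntervalIntegrable e volume a t :=
    he.mono_set (uIcc_subset_uIcc_left (Icc_subset_uIcc ht))
  have hDt : IntervalIntegrable (fun r ↦ K * ‖D r‖) volume a t :=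
    (hD.norm.const_mul K).intervalIntegrable a t
  calc ‖D t‖ ≤ ‖D a‖ + ‖∫ r in a..t, p r‖ := by rw [hDp t ht]; exact norm_add_le _ _
    _ ≤ ‖D a‖ + ∫ r in a..t, (e r + K * ‖D r‖) := by
        gcongr
        exact intervalIntegral.norm_integral_le_of_norm_le ht.1
          (ae_of_all _ fun r hr ↦ hp r ⟨hr.1.le, hr.2.trans ht.2⟩) (het.add hDt)
    _ = ‖D a‖ + (∫ r in a..t, e r) + K * ∫ r in a..t, ‖D r‖ := by
        rw [intervalIntegral.integral_add het hDt, intervalIntegral.integral_const_mul, add_assoc]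
    _ ≤ ‖D a‖ + (∫ r in a..b, e r) + K * ∫ r in a..t, ‖D r‖ := by
        gcongr
        exact intervalIntegral.integral_mono_interval le_rfl ht.1 ht.2 (ae_of_all _ he0) he

theorem norm_le_exp_mul_abs_sub_mul_norm {K a b : ℝ} (hK : 0 ≤ K) (hD : Continuous D)
    (hDp : ∀ t ∈ uIcc a b, D t = D a + ∫ r in a..t, p r)
    (hp : ∀ r ∈ uIcc a b, ‖p r‖ ≤ K * ‖D r‖) :
    ‖D b‖ ≤ exp (K * |b - a|) * ‖D a‖ := by
  rcases le_total a b with hab | hba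
  · rw [uIcc_of_le hab] at hDp hp
    simpa [abs_of_nonneg (sub_nonneg.2 hab), mul_comm] using
      norm_le_of_eq_add_integral (e := 0) hab hK hD intervalIntegrable_const (fun _ ↦ le_rfl) hDp
        (by simpa using hp)
  · rw [uIcc_of_ge hba] at hDp hp
    have hmem {t : ℝ} (ht : t ∈ Icc (-a) (-b)) : -t ∈ Icc b a :=
      ⟨le_neg_of_le_neg ht.2, neg_le_of_neg_le ht.1⟩
    have hreflect (t : ℝ) (ht : t ∈ Icc (-a) (-b)) :
        D (-t) = D (- -a) + ∫ r in (-a)..t, -p (-r) := by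
      rw [hDp (-t) (hmem ht), intervalIntegral.integral_neg, intervalIntegral.integral_comp_neg,
        intervalIntegral.integral_symm (-t), neg_neg]
    have := norm_le_of_eq_add_integral (D := fun t ↦ D (-t)) (e := 0) (neg_le_neg hba) hK
      (hD.comp continuous_neg) intervalIntegrable_const (fun _ ↦ le_rfl) hreflect
      (fun r hr ↦ by simpa using hp (-r) (hmem hr))
    rw [abs_sub_comm, abs_of_nonneg (sub_nonneg.2 hba), mul_comm]
    simpa [neg_add_eq_sub] using this

end Gronwall

section DysonSeries

variable {R : Type*} [NormedRing R] {A : ℝ → R} {K : ℝ≥0}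

theorem intervalIntegrable_mul_of_norm_le {Φ : ℝ → R} (hA : StronglyMeasurable A)
    (hK : ∀ r, ‖A r‖ ≤ K) (hΦ : Continuous Φ) (a b : ℝ) :
    IntervalIntegrable (fun r ↦ A r * Φ r) volume a b := by
  have hAi : IntervalIntegrable A volume a b :=
    (intervalIntegrable_const (c := (K : ℝ))).mono_fun hA.aestronglyMeasurable
      (ae_of_all _ fun r ↦ (hK r).trans (le_abs_self _))
  exact hAi.mul_continuousOn hΦ.continuousOn

variable [NormedAlgebra ℝ R]

/-- The iterated integrals of the Dyson series (Picard iteration) for `Φ' = A Φ`, `Φ 0 = 1`: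
`dysonTerm A n s = ∫ A r₁ ⋯ A rₙ` over `s ≥ r₁ ≥ ⋯ ≥ rₙ ≥ 0`. -/
def dysonTerm (A : ℝ → R) : ℕ → ℝ → R
  | 0 => fun _ ↦ 1
  | n + 1 => fun s ↦ ∫ r in (0 : ℝ)..s, A r * dysonTerm A n r

/-- The Dyson series (time-ordered exponential) of `A`: the fundamental solution, normalised at
time `0`, of the linear equation `Φ' = A Φ`. -/
def dysonSeries (A : ℝ → R) (s : ℝ) : R :=
  ∑' n, dysonTerm A n s

theorem continuous_dysonTerm (hA : StronglyMeasurable A) (hK : ∀ r, ‖A r‖ ≤ K) (n : ℕ) :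
    Continuous (dysonTerm A n) := by
  induction n with
  | zero => exact continuous_const
  | succ n ih =>
    exact intervalIntegral.continuous_primitive
      (fun a b ↦ intervalIntegrable_mul_of_norm_le hA hK ih a b) 0

theorem norm_dysonTerm_le (hK : ∀ r, ‖A r‖ ≤ K) (n : ℕ) (s : ℝ) :
    ‖dysonTerm A n s‖ ≤ ‖(1 : R)‖ * ((K * |s|) ^ n / n.factorial) := by
  induction n generalizing s with
  | zero => simp [dysonTerm]
  | succ n ih =>
    have hbound (r : ℝ) :
        ‖A r * dysonTerm A n r‖ ≤ ‖(1 : R)‖ * K ^ (n + 1) / n.factorial * |r - 0| ^ n := by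
      refine (norm_mul_le_of_le (hK r) (ih r)).trans_eq ?_
      rw [sub_zero, mul_pow]
      ring
    rw [dysonTerm, intervalIntegral.norm_integral_eq_norm_integral_uIoc]
    calc ‖∫ r in uIoc 0 s, A r * dysonTerm A n r‖
        ≤ ∫ r in uIoc 0 s, ‖(1 : R)‖ * K ^ (n + 1) / n.factorial * |r - 0| ^ n :=
          norm_integral_le_of_norm_le (Continuous.intervalIntegrable (by fun_prop) 0 s).def'
            (ae_of_all _ hbound)
      _ = ‖(1 : R)‖ * ((K * |s|) ^ (n + 1) / (n + 1).factorial) := by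
          rw [integral_const_mul, integral_pow_abs_sub_uIoc, sub_zero, Nat.factorial_succ,
            mul_pow]
          push_cast
          field_simp

theorem norm_dysonTerm_le_of_abs_le (hK : ∀ r, ‖A r‖ ≤ K) {B s : ℝ} (hs : |s| ≤ B) (n : ℕ) :
    ‖dysonTerm A n s‖ ≤ ‖(1 : R)‖ * ((K * B) ^ n / n.factorial) :=
  (norm_dysonTerm_le hK n s).trans (by gcongr)

theorem summable_const_mul_pow_div_factorial (c x : ℝ) :
    Summable fun n : ℕ ↦ c * (x ^ n / n.factorial) :=
  (Real.summable_pow_div_factorial x).mul_left c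

theorem tendsto_dysonTerm {ι : Type*} {l : Filter ι} [l.IsCountablyGenerated] {B : ι → ℝ → R}
    (hB : ∀ i, StronglyMeasurable (B i)) (hBK : ∀ i r, ‖B i r‖ ≤ K) {s : ℝ}
    (hBA : ∀ r ∈ uIcc 0 s, Tendsto (B · r) l (𝓝 (A r))) (n : ℕ) :
    Tendsto (fun i ↦ dysonTerm (B i) n s) l (𝓝 (dysonTerm A n s)) := by
  induction n generalizing s with
  | zero => exact tendsto_const_nhds
  | succ n ih =>
    refine intervalIntegral.tendsto_integral_filter_of_dominated_convergence
      (fun _ ↦ K * (‖(1 : R)‖ * ((K * |s|) ^ n / n.factorial)))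
      (Eventually.of_forall fun i ↦ ((hB i).mul
        (continuous_dysonTerm (hB i) (hBK i) n).stronglyMeasurable).aestronglyMeasurable)
      (Eventually.of_forall fun i ↦ ae_of_all _ fun r hr ↦
        norm_mul_le_of_le (hBK i r) (norm_dysonTerm_le_of_abs_le (hBK i) ?_ n))
      intervalIntegrable_const (ae_of_all _ fun r hr ↦ ?_)
    · simpa using abs_sub_left_of_mem_uIcc (uIoc_subset_uIcc hr)
    · have hr' := uIoc_subset_uIcc hr
      exact (hBA r hr').mul (ih fun t ht ↦ hBA t (uIcc_subset_uIcc_left hr' ht))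

variable [CompleteSpace R]

theorem hasSum_dysonSeries (hK : ∀ r, ‖A r‖ ≤ K) (s : ℝ) :
    HasSum (dysonTerm A · s) (dysonSeries A s) :=
  (Summable.of_norm_bounded (summable_const_mul_pow_div_factorial _ _)
    fun n ↦ norm_dysonTerm_le hK n s).hasSum

theorem continuous_dysonSeries (hA : StronglyMeasurable A) (hK : ∀ r, ‖A r‖ ≤ K) :
    Continuous (dysonSeries A) := by
  refine continuous_iff_continuousAt.2 fun s ↦ ?_
  have hball : Metric.closedBall (0 : ℝ) (|s| + 1) ∈ 𝓝 s :=
    mem_of_superset (Metric.isOpen_ball.mem_nhds (by simp)) Metric.ball_subset_closedBall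
  exact (continuousOn_tsum (fun n ↦ (continuous_dysonTerm hA hK n).continuousOn)
    (summable_const_mul_pow_div_factorial _ _) fun n r hr ↦
      norm_dysonTerm_le_of_abs_le hK (by simpa using hr) n).continuousAt hball

theorem dysonSeries_eq_one_add_integral (hA : StronglyMeasurable A) (hK : ∀ r, ‖A r‖ ≤ K)
    (s : ℝ) : dysonSeries A s = 1 + ∫ r in (0 : ℝ)..s, A r * dysonSeries A r := by
  have hsum : HasSum (fun n ↦ dysonTerm A (n + 1) s)
      (∫ r in (0 : ℝ)..s, A r * dysonSeries A r) := by
    refine intervalIntegral.hasSum_integral_of_dominated_convergence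
      (fun n _ ↦ K * (‖(1 : R)‖ * ((K * |s|) ^ n / n.factorial)))
      (fun n ↦ (hA.mul (continuous_dysonTerm hA hK n).stronglyMeasurable).aestronglyMeasurable)
      (fun n ↦ ae_of_all _ fun r hr ↦
        norm_mul_le_of_le (hK r) (norm_dysonTerm_le_of_abs_le hK ?_ n))
      (ae_of_all _ fun _ _ ↦ (summable_const_mul_pow_div_factorial _ _).mul_left _)
      intervalIntegrable_const
      (ae_of_all _ fun r _ ↦ (hasSum_dysonSeries hK r).mul_left (A r))
    simpa using abs_sub_left_of_mem_uIcc (uIoc_subset_uIcc hr)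
  rw [dysonSeries, (hasSum_dysonSeries hK s).summable.tsum_eq_zero_add, hsum.tsum_eq, dysonTerm]

theorem tendsto_dysonSeries {ι : Type*} {l : Filter ι} [l.IsCountablyGenerated] {B : ι → ℝ → R}
    (hB : ∀ i, StronglyMeasurable (B i)) (hBK : ∀ i r, ‖B i r‖ ≤ K) {s : ℝ}
    (hBA : ∀ r ∈ uIcc 0 s, Tendsto (B · r) l (𝓝 (A r))) :
    Tendsto (fun i ↦ dysonSeries (B i) s) l (𝓝 (dysonSeries A s)) :=
  tendsto_tsum_of_dominated_convergence (summable_const_mul_pow_div_factorial _ _)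
    (tendsto_dysonTerm hB hBK hBA)
    (Eventually.of_forall fun i n ↦ norm_dysonTerm_le (hBK i) n s)

end DysonSeries

section Jacobi

variable {𝕜 E : Type*} [NontriviallyNormedField 𝕜] [NormedAddCommGroup E] [NormedSpace 𝕜 E]
  [FiniteDimensional 𝕜 E]

theorem hasDerivAt_det_one_add_smul (A : E →L[𝕜] E) :
    HasDerivAt (fun t : 𝕜 ↦ (1 + t • A).det) (LinearMap.trace 𝕜 E A) 0 := by
  let b := Module.finBasis 𝕜 E
  let m := LinearMap.toMatrix b b A
  let q := (1 + (Polynomial.X : Polynomial 𝕜) • m.map Polynomial.C).det.divX.divX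
  have hdet (t : 𝕜) : (1 + t • A).det = 1 + m.trace * t + q.eval t * t ^ 2 := by
    rw [← Matrix.det_one_add_smul, ContinuousLinearMap.det, ← LinearMap.det_toMatrix b]
    simp [m, LinearMap.toMatrix_one]
  have hderiv := (((hasDerivAt_id (0 : 𝕜)).const_mul m.trace).const_add 1).add
    ((q.hasDerivAt 0).mul (hasDerivAt_pow 2 0))
  simp only [hdet, LinearMap.trace_eq_matrix_trace 𝕜 b]
  simpa using! hderiv

variable [CompleteSpace 𝕜]

theorem contDiff_continuousLinearMap_det {n : WithTop ℕ∞} :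
    ContDiff 𝕜 n fun B : E →L[𝕜] E ↦ B.det := by
  let b := Module.finBasis 𝕜 E
  have hentry (i j) : ContDiff 𝕜 n fun B : E →L[𝕜] E ↦ LinearMap.toMatrix b b B i j :=
    (LinearMap.toContinuousLinearMap (Matrix.entryLinearMap 𝕜 𝕜 i j ∘ₗ
      (LinearMap.toMatrix b b).toLinearMap ∘ₗ ContinuousLinearMap.coeLM 𝕜)).contDiff
  simp only [ContinuousLinearMap.det, ← LinearMap.det_toMatrix b, Matrix.det_apply']
  exact ContDiff.sum fun σ _ ↦ contDiff_const.mul (contDiff_prod fun i _ ↦ hentry _ _)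

theorem fderiv_det_mul (A B : E →L[𝕜] E) :
    fderiv 𝕜 (fun C : E →L[𝕜] E ↦ C.det) B (A * B) = LinearMap.trace 𝕜 E A * B.det := by
  have hline : HasDerivAt (fun t : 𝕜 ↦ (1 + t • A) * B) (A * B) 0 := by
    simpa using! (((hasDerivAt_id (0 : 𝕜)).smul_const A).const_add 1).mul_const B
  have hdet : HasFDerivAt (fun C : E →L[𝕜] E ↦ C.det)
      (fderiv 𝕜 (fun C : E →L[𝕜] E ↦ C.det) B) B :=
    ((contDiff_continuousLinearMap_det (n := 1)).differentiable one_ne_zero B).hasFDerivAt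
  have hprod : HasDerivAt (fun t : 𝕜 ↦ ((1 + t • A) * B).det)
      (LinearMap.trace 𝕜 E A * B.det) 0 := by
    simpa only [ContinuousLinearMap.det, ContinuousLinearMap.toLinearMap_mul, map_mul] using
      (hasDerivAt_det_one_add_smul A).mul_const B.det
  have hchain : HasDerivAt (fun t : 𝕜 ↦ ((1 + t • A) * B).det)
      (fderiv 𝕜 (fun C : E →L[𝕜] E ↦ C.det) B (A * B)) 0 :=
    hdet.comp_hasDerivAt_of_eq 0 hline (by simp)
  exact hchain.unique hprod

theorem hasDerivAt_det_of_hasDerivAt_mul {Φ : 𝕜 → E →L[𝕜] E} {A : E →L[𝕜] E} {t : 𝕜}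
    (hΦ : HasDerivAt Φ (A * Φ t) t) :
    HasDerivAt (fun t ↦ (Φ t).det) (LinearMap.trace 𝕜 E A * (Φ t).det) t := by
  rw [← fderiv_det_mul]
  exact ((contDiff_continuousLinearMap_det (n := 1)).differentiable one_ne_zero
    (Φ t)).hasFDerivAt.comp_hasDerivAt t hΦ

end Jacobi

section Liouville

theorem lipschitzOnWith_const_add_integral {F : Type*} [NormedAddCommGroup F] [NormedSpace ℝ F]
    {f : ℝ → F} {a b C : ℝ} (hf : IntervalIntegrable f volume a b)
    (hC : ∀ r ∈ uIcc a b, ‖f r‖ ≤ C) (c : F) :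
    LipschitzOnWith C.toNNReal (fun t ↦ c + ∫ r in a..t, f r) (uIcc a b) := by
  refine LipschitzOnWith.of_dist_le' fun s hs t ht ↦ ?_
  rw [dist_add_left, dist_eq_norm, intervalIntegral.integral_interval_sub_left
    (hf.mono_set (uIcc_subset_uIcc_left hs)) (hf.mono_set (uIcc_subset_uIcc_left ht))]
  exact intervalIntegral.norm_integral_le_of_norm_le_const fun r hr ↦
    hC r (uIcc_subset_uIcc ht hs (uIoc_subset_uIcc hr))

theorem absolutelyContinuousOnInterval_comp_of_locallyLipschitz {Y Z : Type*}
    [SeminormedAddCommGroup Y] [PseudoMetricSpace Z] {g : Y → Z} {f : ℝ → Y} {a b : ℝ}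
    (hg : LocallyLipschitz g) (hf : AbsolutelyContinuousOnInterval f a b) :
    AbsolutelyContinuousOnInterval (fun t ↦ g (f t)) a b := by
  obtain ⟨L, hL⟩ := LocallyLipschitzOn.exists_lipschitzOnWith_of_compact
    (isCompact_uIcc.image_of_continuousOn hf.continuousOn) hg.locallyLipschitzOn
  rw [absolutelyContinuousOnInterval_iff] at hf ⊢
  intro ε hε
  obtain ⟨δ, hδ, hfδ⟩ := hf (ε / (L + 1)) (by positivity)
  refine ⟨δ, hδ, fun I hI hIδ ↦ ?_⟩
  calc ∑ i ∈ Finset.range I.1, dist (g (f (I.2 i).1)) (g (f (I.2 i).2))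
      ≤ ∑ i ∈ Finset.range I.1, (L + 1) * dist (f (I.2 i).1) (f (I.2 i).2) := by
        refine Finset.sum_le_sum fun i hi ↦ (hL.dist_le_mul _ (mem_image_of_mem f (hI.1 i hi).1) _
          (mem_image_of_mem f (hI.1 i hi).2)).trans ?_
        gcongr
        exact le_add_of_nonneg_right zero_le_one
    _ < ε := by
        rw [← Finset.mul_sum, ← lt_div_iff₀' (by positivity)]
        exact hfδ I hI hIδ

theorem eq_exp_integral_mul_of_ae_hasDerivAt {f α : ℝ → ℝ} {a b : ℝ}
    (hα : IntervalIntegrable α volume a b) (hf : AbsolutelyContinuousOnInterval f a b)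
    (hderiv : ∀ᵐ t, t ∈ uIcc a b → HasDerivAt f (α t * f t) t) :
    f b = exp (∫ r in a..b, α r) * f a := by
  have hac : AbsolutelyContinuousOnInterval (fun t ↦ exp (-∫ r in a..t, α r) * f t) a b :=
    (absolutelyContinuousOnInterval_comp_of_locallyLipschitz
      (contDiff_neg.exp (n := 1)).locallyLipschitz
      (hα.absolutelyContinuousOnInterval_intervalIntegral left_mem_uIcc)).mul hf
  have hzero : ∀ᵐ t, t ∈ uIcc a b →
      HasDerivAt (fun t ↦ exp (-∫ r in a..t, α r) * f t) 0 t := by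
    filter_upwards [hderiv, hα.ae_hasDerivAt_integral] with t hft hαt ht
    exact ((hαt ht a left_mem_uIcc).neg.exp.mul (hft ht)).congr_deriv (by ring)
  obtain ⟨c, hc⟩ := hac.const_of_ae_hasDerivAt_zero hzero
  have hconst := (hc b right_mem_uIcc).trans (hc a left_mem_uIcc).symm
  rw [intervalIntegral.integral_same, neg_zero, exp_zero, one_mul] at hconst
  rw [← hconst, ← mul_assoc, ← exp_add, add_neg_cancel, exp_zero, one_mul]

section Algebra

variable {R : Type*} [NormedRing R] [NormedAlgebra ℝ R] [CompleteSpace R] {A : ℝ → R} {K : ℝ≥0}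

theorem exists_lipschitzOnWith_dysonSeries (hA : StronglyMeasurable A) (hK : ∀ r, ‖A r‖ ≤ K)
    (s : ℝ) : ∃ C, LipschitzOnWith C (dysonSeries A) (uIcc 0 s) := by
  have hΦ := continuous_dysonSeries hA hK
  obtain ⟨B, hB⟩ := isCompact_uIcc.exists_bound_of_continuousOn (hΦ.continuousOn (s := uIcc 0 s))
  rw [funext (dysonSeries_eq_one_add_integral hA hK)]
  exact ⟨_, lipschitzOnWith_const_add_integral (intervalIntegrable_mul_of_norm_le hA hK hΦ 0 s)
    (fun r hr ↦ norm_mul_le_of_le (hK r) (hB r hr)) 1⟩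

theorem ae_hasDerivAt_dysonSeries (hA : StronglyMeasurable A) (hK : ∀ r, ‖A r‖ ≤ K) (s : ℝ) :
    ∀ᵐ t, t ∈ uIcc 0 s → HasDerivAt (dysonSeries A) (A t * dysonSeries A t) t := by
  filter_upwards [(intervalIntegrable_mul_of_norm_le hA hK (continuous_dysonSeries hA hK)
    0 s).ae_hasDerivAt_integral] with t hderiv ht
  exact ((hderiv ht 0 left_mem_uIcc).const_add 1).congr_of_eventuallyEq
    (Eventually.of_forall (dysonSeries_eq_one_add_integral hA hK))

end Algebra

theorem det_dysonSeries {E : Type*} [NormedAddCommGroup E] [NormedSpace ℝ E]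
    [FiniteDimensional ℝ E] {A : ℝ → E →L[ℝ] E} {K : ℝ≥0} (hA : StronglyMeasurable A)
    (hK : ∀ r, ‖A r‖ ≤ K) (s : ℝ) :
    (dysonSeries A s).det = exp (∫ r in (0 : ℝ)..s, LinearMap.trace ℝ E (A r)) := by
  have := FiniteDimensional.complete ℝ E
  have hA_int : IntervalIntegrable A volume 0 s := by
    simpa using intervalIntegrable_mul_of_norm_le hA hK continuous_one 0 s
  let tr : (E →L[ℝ] E) →L[ℝ] ℝ :=
    LinearMap.toContinuousLinearMap (LinearMap.trace ℝ E ∘ₗ ContinuousLinearMap.coeLM ℝ)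
  have htr_int : IntervalIntegrable (fun r ↦ LinearMap.trace ℝ E (A r)) volume 0 s :=
    ⟨tr.integrable_comp hA_int.1, tr.integrable_comp hA_int.2⟩
  obtain ⟨C, hΦ_lip⟩ := exists_lipschitzOnWith_dysonSeries hA hK s
  have hdet_ac : AbsolutelyContinuousOnInterval (fun t ↦ (dysonSeries A t).det) 0 s :=
    absolutelyContinuousOnInterval_comp_of_locallyLipschitz
      (contDiff_continuousLinearMap_det (n := 1)).locallyLipschitz
      hΦ_lip.absolutelyContinuousOnInterval
  have hdet_deriv : ∀ᵐ t, t ∈ uIcc 0 s → HasDerivAt (fun t ↦ (dysonSeries A t).det)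
      (LinearMap.trace ℝ E (A t) * (dysonSeries A t).det) t := by
    filter_upwards [ae_hasDerivAt_dysonSeries hA hK s] with t hΦ ht
    exact hasDerivAt_det_of_hasDerivAt_mul (hΦ ht)
  have hdet_zero : (dysonSeries A 0).det = 1 := by
    rw [dysonSeries_eq_one_add_integral hA hK, intervalIntegral.integral_same, add_zero]
    exact LinearMap.det_id
  simpa only [hdet_zero, mul_one] using
    eq_exp_integral_mul_of_ae_hasDerivAt htr_int hdet_ac hdet_deriv

end Liouville

section GlobalDiffeomorphism

theorem surjective_of_antilipschitzWith_of_isOpenMap {α β : Type*} [EMetricSpace α]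
    [CompleteSpace α] [Nonempty α] [EMetricSpace β] [PreconnectedSpace β] {f : α → β} {c : ℝ≥0}
    (hf : UniformContinuous f) (hanti : AntilipschitzWith c f) (hopen : IsOpenMap f) :
    Function.Surjective f := by
  have hclopen : IsClopen (range f) :=
    ⟨(hanti.isClosedEmbedding hf).isClosed_range, hopen.isOpen_range⟩
  exact range_eq_univ.1 (hclopen.eq_univ (range_nonempty f))

theorem exists_homeomorph_contDiff_symm {𝕜 E F : Type*} [RCLike 𝕜] [NormedAddCommGroup E]
    [NormedSpace 𝕜 E] [CompleteSpace E] [NormedAddCommGroup F] [NormedSpace 𝕜 F]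
    {f : E → F} {f' : E → E ≃L[𝕜] F} {c : ℝ≥0} {n : WithTop ℕ∞} (hn : n ≠ 0)
    (hf : ContDiff 𝕜 n f) (hunif : UniformContinuous f) (hanti : AntilipschitzWith c f)
    (hf' : ∀ x, HasFDerivAt f (f' x : E →L[𝕜] F) x) :
    ∃ Φ : E ≃ₜ F, ⇑Φ = f ∧ ContDiff 𝕜 n Φ.symm := by
  have hopen : IsOpenMap f := isOpenMap_of_hasStrictFDerivAt_equiv fun x ↦
    hf.contDiffAt.hasStrictFDerivAt' (hf' x) hn
  let : NormedSpace ℝ F := NormedSpace.restrictScalars ℝ 𝕜 F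
  have hbij : Function.Bijective f :=
    ⟨hanti.injective, surjective_of_antilipschitzWith_of_isOpenMap hunif hanti hopen⟩
  let Φ : E ≃ₜ F :=
    (Equiv.ofBijective f hbij).toHomeomorphOfContinuousOpen hf.continuous hopen
  exact ⟨Φ, rfl, Φ.contDiff_symm hf' hf⟩

end GlobalDiffeomorphism

theorem measurePreserving_of_abs_det_eq_one {E : Type*} [NormedAddCommGroup E] [NormedSpace ℝ E]
    [FiniteDimensional ℝ E] [MeasurableSpace E] [BorelSpace E] (μ : Measure E)
    [μ.IsAddHaarMeasure] (F : E ≃ₜ E) {F' : E → E →L[ℝ] E} (hF : ∀ x, HasFDerivAt F (F' x) x)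
    (hdet : ∀ x, |(F' x).det| = 1) : MeasurePreserving F μ μ := by
  refine ⟨F.measurable, Measure.ext fun s hs ↦ ?_⟩
  rw [Measure.map_apply F.measurable hs]
  have hvol := lintegral_abs_det_fderiv_eq_addHaar_image μ (F.measurable hs)
    (fun x _ ↦ (hF x).hasFDerivWithinAt) F.injective.injOn
  rw [image_preimage_eq s F.surjective] at hvol
  simpa [hdet] using hvol

theorem isLittleO_intervalIntegral {ι F G : Type*} [NormedAddCommGroup F] [NormedSpace ℝ F]
    [NormedAddCommGroup G] {l : Filter ι} [l.IsCountablyGenerated] {f : ι → ℝ → F} {g : ι → G}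
    {a b C : ℝ}
    (hmeas : ∀ᶠ i in l, AEStronglyMeasurable (f i) (volume.restrict (uIoc a b)))
    (hbound : ∀ᶠ i in l, ∀ r ∈ uIoc a b, ‖f i r‖ ≤ C * ‖g i‖)
    (hlim : ∀ r ∈ uIoc a b, (f · r) =o[l] g) :
    (fun i ↦ ∫ r in a..b, f i r) =o[l] g := by
  have hzero : ∀ᶠ i in l, ‖g i‖ = 0 → ∫ r in a..b, f i r = 0 := hbound.mono fun i hi hg ↦ by
    simp only [hg, mul_zero, norm_le_zero_iff] at hi
    exact intervalIntegral.integral_zero_ae (ae_of_all _ hi)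
  rw [← Asymptotics.isLittleO_norm_right, ← Asymptotics.isLittleOTVS_iff_isLittleO (𝕜 := ℝ),
    Asymptotics.isLittleOTVS_iff_tendsto_inv_smul hzero]
  simp_rw [← intervalIntegral.integral_smul]
  rw [← intervalIntegral.integral_zero (a := a) (b := b) (E := F) (μ := volume)]
  refine intervalIntegral.tendsto_integral_filter_of_dominated_convergence (fun _ ↦ |C|)
    (hmeas.mono fun i hi ↦ hi.const_smul _) ?_ intervalIntegrable_const
    (ae_of_all _ fun r hr ↦ ?_)
  · filter_upwards [hbound] with i hi
    refine ae_of_all _ fun r hr ↦ ?_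
    rw [norm_smul, norm_inv, norm_norm, inv_mul_eq_div]
    exact div_le_of_le_mul₀ (norm_nonneg _) (abs_nonneg _)
      ((hi r hr).trans (by gcongr; exact le_abs_self C))
  · exact (Asymptotics.isLittleOTVS_iff_isLittleO.2 (hlim r hr).norm_right).tendsto_inv_smul

theorem trace_eq_sum_apply_single {𝕜 ι : Type*} [RCLike 𝕜] [Fintype ι] [DecidableEq ι]
    (A : EuclideanSpace 𝕜 ι →ₗ[𝕜] EuclideanSpace 𝕜 ι) :
    LinearMap.trace 𝕜 (EuclideanSpace 𝕜 ι) A = ∑ i, A (EuclideanSpace.single i 1) i := by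
  simp [LinearMap.trace_eq_sum_inner A (EuclideanSpace.basisFun ι 𝕜),
    EuclideanSpace.inner_single_left]

section Flow

variable {E : Type*} [NormedAddCommGroup E] [NormedSpace ℝ E]

/-- The pathwise formulation of `dX = u(s, X) ds + dw`, `X 0 = x + w 0`, on `[0, T]`: for a fixed
realisation `w` of the noise, `X x` is the path labelled by the point `x`. The noise being additive,
no stochastic integral is involved. -/
structure IsAdditiveNoiseFlow (u : ℝ → E → E) (w : ℝ → E) (T : ℝ) (X : E → ℝ → E) : Prop where
  continuous_path (x : E) : Continuous (X x)
  path_eq (x : E) : ∀ s ∈ Icc 0 T, X x s = x + (∫ r in (0 : ℝ)..s, u r (X x r)) + w s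

/-- The solution of the variational equation `Φ' = ∇u(r, X x r) Φ`, `Φ 0 = 1`, along the path
started at `x`; it is the candidate for the derivative of `x ↦ X x s`. -/
def tangentFlow (u : ℝ → E → E) (X : E → ℝ → E) (x : E) : ℝ → E →L[ℝ] E :=
  dysonSeries fun r ↦ fderiv ℝ (u r) (X x r)

/-- The first-order Taylor remainder at time `r` of the drift `u` between the paths labelled by
`x` and `y`. -/
def linearizationError (u : ℝ → E → E) (X : E → ℝ → E) (x y : E) (r : ℝ) : E :=
  u r (X y r) - u r (X x r) - fderiv ℝ (u r) (X x r) (X y r - X x r)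

namespace IsAdditiveNoiseFlow

variable {u : ℝ → E → E} {w : ℝ → E} {T : ℝ} {X : E → ℝ → E} {K : ℝ≥0} {s : ℝ}

section Bilipschitz

variable (hX : IsAdditiveNoiseFlow u w T X) (hu : Continuous (Function.uncurry u))
include hX hu

theorem continuous_drift (x : E) : Continuous fun r ↦ u r (X x r) :=
  hu.comp (continuous_id.prodMk (hX.continuous_path x))

theorem sub_eq_add_integral {t : ℝ} (hs : s ∈ Icc 0 T) (ht : t ∈ Icc 0 T) (x y : E) :
    X y t - X x t = (X y s - X x s) + ∫ r in s..t, (u r (X y r) - u r (X x r)) := by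
  have hint (z : E) (a b : ℝ) : IntervalIntegrable (fun r ↦ u r (X z r)) volume a b :=
    (hX.continuous_drift hu z).intervalIntegrable a b
  rw [intervalIntegral.integral_sub (hint y s t) (hint x s t),
    ← intervalIntegral.integral_interval_sub_left (hint y 0 t) (hint y 0 s),
    ← intervalIntegral.integral_interval_sub_left (hint x 0 t) (hint x 0 s),
    hX.path_eq x s hs, hX.path_eq y s hs, hX.path_eq x t ht, hX.path_eq y t ht]
  abel

variable (hK : ∀ r, LipschitzWith K (u r))
include hK

theorem norm_sub_le_exp_mul_norm_sub {t : ℝ} (hs : s ∈ Icc 0 T) (ht : t ∈ Icc 0 T) (x y : E) :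
    ‖X y t - X x t‖ ≤ exp (K * |t - s|) * ‖X y s - X x s‖ :=
  norm_le_exp_mul_abs_sub_mul_norm K.2 ((hX.continuous_path y).sub (hX.continuous_path x))
    (fun _ hr ↦ hX.sub_eq_add_integral hu hs (ordConnected_Icc.uIcc_subset hs ht hr) x y)
    (fun r _ ↦ (hK r).norm_sub_le _ _)

theorem norm_sub_le_exp_mul (hs : s ∈ Icc 0 T) (x y : E) :
    ‖X y s - X x s‖ ≤ exp (K * s) * ‖y - x‖ := by
  have h0 : (0 : ℝ) ∈ Icc 0 T := left_mem_Icc.2 (hs.1.trans hs.2)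
  simpa [hX.path_eq _ 0 h0, abs_of_nonneg hs.1] using
    hX.norm_sub_le_exp_mul_norm_sub hu hK h0 hs x y

theorem norm_sub_le_exp_mul_symm (hs : s ∈ Icc 0 T) (x y : E) :
    ‖y - x‖ ≤ exp (K * s) * ‖X y s - X x s‖ := by
  have h0 : (0 : ℝ) ∈ Icc 0 T := left_mem_Icc.2 (hs.1.trans hs.2)
  simpa [hX.path_eq _ 0 h0, abs_of_nonneg hs.1] using
    hX.norm_sub_le_exp_mul_norm_sub hu hK hs h0 x y

theorem lipschitzWith (hs : s ∈ Icc 0 T) : LipschitzWith (exp (K * s)).toNNReal (X · s) :=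
  LipschitzWith.of_dist_le' fun x y ↦ by
    simpa only [dist_eq_norm] using hX.norm_sub_le_exp_mul hu hK hs y x

theorem antilipschitzWith (hs : s ∈ Icc 0 T) :
    AntilipschitzWith (exp (K * s)).toNNReal (X · s) :=
  AntilipschitzWith.of_le_mul_dist fun x y ↦ by
    simpa only [dist_eq_norm, coe_toNNReal _ (exp_pos _).le] using
      hX.norm_sub_le_exp_mul_symm hu hK hs y x

theorem norm_linearizationError_le {r : ℝ} (hs : s ∈ Icc 0 T) (hr : r ∈ Icc 0 s) (x y : E) :
    ‖linearizationError u X x y r‖ ≤ 2 * K * exp (K * s) * ‖y - x‖ :=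
  calc ‖linearizationError u X x y r‖
      ≤ K * ‖X y r - X x r‖ + K * ‖X y r - X x r‖ :=
        norm_sub_le_of_le ((hK r).norm_sub_le _ _)
          (ContinuousLinearMap.le_of_opNorm_le _ (norm_fderiv_le_of_lipschitz ℝ (hK r)) _)
    _ = 2 * K * ‖X y r - X x r‖ := by ring
    _ ≤ 2 * K * (exp (K * r) * ‖y - x‖) := by
        gcongr
        exact hX.norm_sub_le_exp_mul hu hK ⟨hr.1, hr.2.trans hs.2⟩ x y
    _ ≤ 2 * K * (exp (K * s) * ‖y - x‖) := by
        gcongr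
        exact hr.2
    _ = 2 * K * exp (K * s) * ‖y - x‖ := by ring

theorem isLittleO_linearizationError (hdiff : Differentiable ℝ (u s)) (hs : s ∈ Icc 0 T) (x : E) :
    (fun y ↦ linearizationError u X x y s) =o[𝓝 x] fun y ↦ y - x := by
  have hlip := hX.lipschitzWith hu hK hs
  exact ((hdiff (X x s)).hasFDerivAt.isLittleO.comp_tendsto
    hlip.continuous.continuousAt.tendsto).trans_isBigO
      (.of_bound _ (Eventually.of_forall fun y ↦ hX.norm_sub_le_exp_mul hu hK hs x y))

end Bilipschitz

section Derivative

variable [FiniteDimensional ℝ E] (hX : IsAdditiveNoiseFlow u w T X)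
  (hu : Continuous (Function.uncurry u))
include hX hu

theorem stronglyMeasurable_fderiv (x : E) :
    StronglyMeasurable fun r ↦ fderiv ℝ (u r) (X x r) := by
  have := FiniteDimensional.complete ℝ E
  have := FiniteDimensional.proper ℝ (E →L[ℝ] E)
  borelize E
  exact ((measurable_fderiv_with_param ℝ hu).comp
    (measurable_id.prodMk (hX.continuous_path x).measurable)).stronglyMeasurable

theorem stronglyMeasurable_linearizationError (x y : E) :
    StronglyMeasurable (linearizationError u X x y) :=
  ((hX.continuous_drift hu y).sub (hX.continuous_drift hu x)).stronglyMeasurable.sub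
    (isBoundedBilinearMap_apply.continuous.comp_stronglyMeasurable
      ((hX.stronglyMeasurable_fderiv hu x).prodMk
        ((hX.continuous_path y).sub (hX.continuous_path x)).stronglyMeasurable))

variable (hK : ∀ r, LipschitzWith K (u r))
include hK

theorem intervalIntegrable_norm_linearizationError (hs : s ∈ Icc 0 T) (x y : E) :
    IntervalIntegrable (fun r ↦ ‖linearizationError u X x y r‖) volume 0 s := by
  refine (intervalIntegrable_const (c := 2 * K * exp (K * s) * ‖y - x‖)).mono_fun'
    (hX.stronglyMeasurable_linearizationError hu x y).norm.aestronglyMeasurable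
    ((ae_restrict_iff' measurableSet_uIoc).2 (ae_of_all _ fun r hr ↦ ?_))
  exact (norm_norm _).trans_le <| hX.norm_linearizationError_le hu hK hs
    (uIcc_of_le hs.1 ▸ uIoc_subset_uIcc hr) x y

theorem continuous_tangentFlow_path (x : E) : Continuous (tangentFlow u X x) :=
  have := FiniteDimensional.complete ℝ E
  continuous_dysonSeries (hX.stronglyMeasurable_fderiv hu x)
    fun r ↦ norm_fderiv_le_of_lipschitz ℝ (hK r)

theorem det_tangentFlow (x : E) (s : ℝ) : (tangentFlow u X x s).det =
    exp (∫ r in (0 : ℝ)..s, LinearMap.trace ℝ E (fderiv ℝ (u r) (X x r))) :=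
  det_dysonSeries (hX.stronglyMeasurable_fderiv hu x)
    (fun r ↦ norm_fderiv_le_of_lipschitz ℝ (hK r)) s

theorem continuous_tangentFlow (hu1 : ∀ r, ContDiff ℝ 1 (u r)) (hs : s ∈ Icc 0 T) :
    Continuous fun x ↦ tangentFlow u X x s := by
  have := FiniteDimensional.complete ℝ E
  refine continuous_iff_continuousAt.2 fun x ↦ tendsto_dysonSeries
    (fun y ↦ hX.stronglyMeasurable_fderiv hu y)
    (fun y r ↦ norm_fderiv_le_of_lipschitz ℝ (hK r)) fun r hr ↦ ?_
  rw [uIcc_of_le hs.1] at hr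
  have hpath := (hX.lipschitzWith hu hK ⟨hr.1, hr.2.trans hs.2⟩).continuous
  exact (((hu1 r).continuous_fderiv one_ne_zero).comp hpath).tendsto x

theorem intervalIntegrable_fderiv_mul_tangentFlow (x : E) (a b : ℝ) :
    IntervalIntegrable (fun r ↦ fderiv ℝ (u r) (X x r) * tangentFlow u X x r) volume a b :=
  intervalIntegrable_mul_of_norm_le (hX.stronglyMeasurable_fderiv hu x)
    (fun r ↦ norm_fderiv_le_of_lipschitz ℝ (hK r)) (hX.continuous_tangentFlow_path hu hK x) a b

theorem tangentFlow_apply (x v : E) (s : ℝ) : tangentFlow u X x s v =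
    v + ∫ r in (0 : ℝ)..s, fderiv ℝ (u r) (X x r) (tangentFlow u X x r v) := by
  have := FiniteDimensional.complete ℝ E
  rw [tangentFlow, dysonSeries_eq_one_add_integral (hX.stronglyMeasurable_fderiv hu x)
    (fun r ↦ norm_fderiv_le_of_lipschitz ℝ (hK r)), add_apply]
  exact congrArg (v + ·) (ContinuousLinearMap.intervalIntegral_apply
    (hX.intervalIntegrable_fderiv_mul_tangentFlow hu hK x 0 s) v)

theorem sub_sub_tangentFlow_eq_integral (hs : s ∈ Icc 0 T) (x y : E) :
    X y s - X x s - tangentFlow u X x s (y - x) = ∫ r in (0 : ℝ)..s,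
      (u r (X y r) - u r (X x r) - fderiv ℝ (u r) (X x r) (tangentFlow u X x r (y - x))) := by
  have h0 : (0 : ℝ) ∈ Icc 0 T := left_mem_Icc.2 (hs.1.trans hs.2)
  have hdrift : IntervalIntegrable (fun r ↦ u r (X y r) - u r (X x r)) volume 0 s :=
    ((hX.continuous_drift hu y).sub (hX.continuous_drift hu x)).intervalIntegrable 0 s
  have hΦ := hX.intervalIntegrable_fderiv_mul_tangentFlow hu hK x 0 s
  have hlin : IntervalIntegrable
      (fun r ↦ fderiv ℝ (u r) (X x r) (tangentFlow u X x r (y - x))) volume 0 s :=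
    ⟨hΦ.1.apply_continuousLinearMap (y - x), hΦ.2.apply_continuousLinearMap (y - x)⟩
  rw [intervalIntegral.integral_sub hdrift hlin, hX.sub_eq_add_integral hu h0 hs,
    hX.tangentFlow_apply hu hK x (y - x) s, hX.path_eq x 0 h0, hX.path_eq y 0 h0,
    intervalIntegral.integral_same, intervalIntegral.integral_same]
  abel

theorem norm_sub_sub_tangentFlow_le (hs : s ∈ Icc 0 T) (x y : E) :
    ‖X y s - X x s - tangentFlow u X x s (y - x)‖ ≤
      exp (K * s) * ‖∫ r in (0 : ℝ)..s, ‖linearizationError u X x y r‖‖ := by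
  let D (r : ℝ) : E := X y r - X x r - tangentFlow u X x r (y - x)
  have hD : Continuous D := ((hX.continuous_path y).sub (hX.continuous_path x)).sub
    ((hX.continuous_tangentFlow_path hu hK x).clm_apply continuous_const)
  have hDp (t : ℝ) (ht : t ∈ Icc 0 s) :=
    hX.sub_sub_tangentFlow_eq_integral hu hK ⟨ht.1, ht.2.trans hs.2⟩ x y
  have hD0 : D 0 = 0 := (hDp 0 (left_mem_Icc.2 hs.1)).trans intervalIntegral.integral_same
  have hp (r : ℝ) :
      ‖u r (X y r) - u r (X x r) - fderiv ℝ (u r) (X x r) (tangentFlow u X x r (y - x))‖ ≤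
        ‖linearizationError u X x y r‖ + K * ‖D r‖ :=
    calc _ = ‖linearizationError u X x y r + fderiv ℝ (u r) (X x r) (D r)‖ := by
          simp only [linearizationError, D, map_sub]
          abel_nf
      _ ≤ _ := norm_add_le_of_le le_rfl
          (ContinuousLinearMap.le_of_opNorm_le _ (norm_fderiv_le_of_lipschitz ℝ (hK r)) _)
  have hgronwall := norm_le_of_eq_add_integral hs.1 K.2 hD
    (hX.intervalIntegrable_norm_linearizationError hu hK hs x y) (fun _ ↦ norm_nonneg _)
    (fun t ht ↦ by rw [hD0, zero_add]; exact hDp t ht) (fun r _ ↦ hp r)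
  rw [hD0, norm_zero, zero_add, sub_zero, mul_comm] at hgronwall
  exact hgronwall.trans (mul_le_mul_of_nonneg_left (le_norm_self _) (exp_pos _).le)

theorem hasFDerivAt (hdiff : ∀ r, Differentiable ℝ (u r)) (hs : s ∈ Icc 0 T) (x : E) :
    HasFDerivAt (X · s) (tangentFlow u X x s) x := by
  have hmem {r : ℝ} (hr : r ∈ uIoc 0 s) : r ∈ Icc 0 s := uIcc_of_le hs.1 ▸ uIoc_subset_uIcc hr
  have herr : (fun y ↦ ∫ r in (0 : ℝ)..s, ‖linearizationError u X x y r‖) =o[𝓝 x]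
      fun y ↦ y - x := by
    refine isLittleO_intervalIntegral (C := 2 * K * exp (K * s))
      (Eventually.of_forall fun y ↦
        (hX.stronglyMeasurable_linearizationError hu x y).norm.aestronglyMeasurable)
      (Eventually.of_forall fun y r hr ↦ ?_) fun r hr ↦ ?_
    · rw [norm_norm]
      exact hX.norm_linearizationError_le hu hK hs (hmem hr) x y
    · exact (hX.isLittleO_linearizationError hu hK (hdiff r)
        ⟨(hmem hr).1, (hmem hr).2.trans hs.2⟩ x).norm_left
  exact hasFDerivAt_iff_isLittleO.2 ((Asymptotics.IsBigO.of_bound _ (Eventually.of_forall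
    (hX.norm_sub_sub_tangentFlow_le hu hK hs x))).trans_isLittleO herr)

theorem contDiff (hu1 : ∀ r, ContDiff ℝ 1 (u r)) (hs : s ∈ Icc 0 T) :
    ContDiff ℝ 1 (X · s) :=
  contDiff_one_iff_hasFDerivAt.2 ⟨_, hX.continuous_tangentFlow hu hK hu1 hs,
    hX.hasFDerivAt hu hK (fun r ↦ (hu1 r).differentiable one_ne_zero) hs⟩

theorem exists_homeomorph (hu1 : ∀ r, ContDiff ℝ 1 (u r)) (hs : s ∈ Icc 0 T) :
    ∃ Φ : E ≃ₜ E, ⇑Φ = (X · s) ∧ ContDiff ℝ 1 Φ.symm := by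
  have := FiniteDimensional.complete ℝ E
  have hdet (x : E) : (tangentFlow u X x s).det ≠ 0 := by
    rw [hX.det_tangentFlow hu hK]
    exact exp_ne_zero _
  exact exists_homeomorph_contDiff_symm
    (f' := fun x ↦ (tangentFlow u X x s).toContinuousLinearEquivOfDetNeZero (hdet x))
    one_ne_zero (hX.contDiff hu hK hu1 hs) (hX.lipschitzWith hu hK hs).uniformContinuous
    (hX.antilipschitzWith hu hK hs)
    (hX.hasFDerivAt hu hK (fun r ↦ (hu1 r).differentiable one_ne_zero) hs)

end Derivative

end IsAdditiveNoiseFlow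

end Flow

theorem lagrangian_flow_volume_preserving_general {E : Type*} [NormedAddCommGroup E]
    [NormedSpace ℝ E] [FiniteDimensional ℝ E] [MeasurableSpace E] [BorelSpace E] (μ : Measure E)
    [μ.IsAddHaarMeasure] {u : ℝ → E → E} {w : ℝ → E} {T : ℝ} {X : E → ℝ → E} {K : ℝ≥0}
    (hX : IsAdditiveNoiseFlow u w T X) (hu : Continuous (Function.uncurry u))
    (hK : ∀ r, LipschitzWith K (u r)) (hu1 : ∀ r, ContDiff ℝ 1 (u r))
    (hdiv : ∀ r x, LinearMap.trace ℝ E (fderiv ℝ (u r) x) = 0) :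
    ∀ s ∈ Icc 0 T,
      (∃ F : E ≃ E, (∀ x, F x = X x s) ∧
        ContDiff ℝ 1 (F : E → E) ∧ ContDiff ℝ 1 (F.symm : E → E)) ∧
      (∀ x, (fderiv ℝ (fun x ↦ X x s) x).det = 1) ∧
      MeasurePreserving (fun x ↦ X x s) μ μ ∧
      (∀ φ : E → ℝ, Integrable φ μ → ∫ x, φ (X x s) ∂μ = ∫ x, φ x ∂μ) := by
  intro s hs
  have hderiv := hX.hasFDerivAt hu hK (fun r ↦ (hu1 r).differentiable one_ne_zero) hs
  have hdet (x : E) : (tangentFlow u X x s).det = 1 := by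
    simp [hX.det_tangentFlow hu hK, hdiv]
  have hC1 := hX.contDiff hu hK hu1 hs
  obtain ⟨F, hF, hFsymm⟩ := hX.exists_homeomorph hu hK hu1 hs
  rw [← hF] at hC1
  have hFμ : MeasurePreserving F μ μ := measurePreserving_of_abs_det_eq_one μ F
    (F' := fun x ↦ tangentFlow u X x s) (fun x ↦ hF ▸ hderiv x) fun x ↦ by simp [hdet]
  refine ⟨⟨F.toEquiv, congrFun hF, hC1, hFsymm⟩, fun x ↦ ?_, hF ▸ hFμ, fun φ _ ↦ ?_⟩
  · rw [(hderiv x).fderiv, hdet]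
  · simpa only [hF] using hFμ.integral_comp F.measurableEmbedding φ

/-- for a divergence-free drift `u ∈ C([0,T];C¹_b)` the
stochastic flow `x ↦ X^x_s` of `dX = u dt + √(2ν) dW` (written pathwise along a
fixed Brownian path `W`, the noise being additive) is a diffeomorphism of `ℝ³`
with Jacobian determinant identically `1`; consequently it preserves Lebesgue
measure and `∫ φ(X^x_s) dx = ∫ φ(x) dx` for every `φ ∈ L¹`. -/
theorem lagrangian_flow_volume_preserving
    (T ν : ℝ) (hT : 0 ≤ T) (hν : 0 < ν)
    (u : ℝ → E3 → E3) (hu : Continuous (Function.uncurry u))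
    (hu1 : ∀ r, ContDiff ℝ 1 (u r))
    (hub : ∃ M, ∀ r x, ‖u r x‖ + ‖fderiv ℝ (u r) x‖ ≤ M)
    (hdiv : ∀ r x, ∑ i, fderiv ℝ (u r) x (EuclideanSpace.single i 1) i = 0)
    (W : ℝ → E3) (hW : Continuous W) (hW0 : W 0 = 0)
    (X : E3 → ℝ → E3) (hXc : ∀ x, Continuous (X x))
    (hX : ∀ x, ∀ s ∈ Icc 0 T,
      X x s = x + (∫ r in (0 : ℝ)..s, u r (X x r)) + Real.sqrt (2 * ν) • W s) :
    ∀ s ∈ Icc 0 T,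
      (∃ F : E3 ≃ E3, (∀ x, F x = X x s) ∧
        ContDiff ℝ 1 (F : E3 → E3) ∧ ContDiff ℝ 1 (F.symm : E3 → E3)) ∧
      (∀ x, (fderiv ℝ (fun x => X x s) x).det = 1) ∧
      MeasurePreserving (fun x => X x s) volume volume ∧
      (∀ φ : E3 → ℝ, Integrable φ volume →
        ∫ x, φ (X x s) = ∫ x, φ x) := by
  obtain ⟨M, hM⟩ := hub
  have hlip (r : ℝ) : LipschitzWith M.toNNReal (u r) :=
    lipschitzWith_of_nnnorm_fderiv_le ((hu1 r).differentiable one_ne_zero) fun x ↦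
      NNReal.le_toNNReal_of_coe_le ((le_add_of_nonneg_left (norm_nonneg _)).trans (hM r x))
  have hflow : IsAdditiveNoiseFlow u (fun s ↦ √(2 * ν) • W s) T X := ⟨hXc, hX⟩
  exact lagrangian_flow_volume_preserving_general volume hflow hu hlip hu1 fun r x ↦
    (trace_eq_sum_apply_single _).trans (hdiv r x)

end
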